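/- (Theorem 1, convergence form) The symmetric-point density evolution map F is continuous and nondecreasing on [0,1] with F([0,1]) ⊆ [0,1], and the density evolution sequence defined by x_0 = 1 and x_{i+1} = F(x_i) is nonincreasing and converges to a limit L which is a fixed point of F satisfying L < 1/N. Hence the residual bit erasure probability of the LT ensemble at the extremal symmetric point does not exceed 1/N. -/

import Mathlib

open Real Filter

noncomputable def qp (p x : ℝ) : ℝ :=
  (Real.sqrt ((1 - p) ^ 2 + 4 * p * x) - (1 - p)) / (2 * p)

noncomputable def aCoeff (p : ℝ) (i : ℕ) : ℝ :=
  (∑ k ∈ Finset.range i, (Nat.choose (2 * i - 1) k : ℝ) * p ^ k) /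
    (i * (1 + p) ^ (2 * i - 1))

noncomputable def Gpart (p : ℝ) (N : ℕ) : ℝ := ∑ i ∈ Finset.Icc 1 N, aCoeff p i

noncomputable def Sp (p x : ℝ) : ℝ := - Real.log (qp p (1 - x))

noncomputable def rhoN (p μ : ℝ) (N : ℕ) (x : ℝ) : ℝ :=
  (μ + (∑ i ∈ Finset.Icc 1 N, aCoeff p i * x ^ i) + x ^ N) / (μ + Gpart p N + 1)

noncomputable def lamBarN (p μ : ℝ) (N : ℕ) (x : ℝ) : ℝ :=
  Real.exp (-(μ + Gpart p N + 1) * rhoN p μ N (1 - x))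

noncomputable def deSym (p μ : ℝ) (N : ℕ) (x : ℝ) : ℝ :=
  ((1 - p) + p * lamBarN p μ N x) * lamBarN p μ N x

noncomputable def cornerMap (p μ : ℝ) (N : ℕ) (α ε₁ ε₂ : ℝ) (y : ℝ) : ℝ :=
  ((1 - p) + p * Real.exp (-(α * (1 - ε₁)))) *
    Real.exp (-(α * (1 - ε₂)) * rhoN p μ N (1 - y))

/-- The generating function of the central binomial coefficients, normalized to radius one. -/
theorem hasSum_centralBinom_div_four_pow {t : ℝ} (ht0 : 0 ≤ t) (ht1 : t < 1) :
    HasSum (fun n : ℕ => (n.centralBinom : ℝ) * (t / 4) ^ n) (1 / √(1 - t)) := by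
  have hc : ∀ n : ℕ, Ring.choose ((1 / 2 : ℝ) + n - 1) n = n.centralBinom / 4 ^ n := by
    intro n
    have h := Ring.factorial_nsmul_multichoose_eq_ascPochhammer (1 / 2 : ℝ) n
    rw [Polynomial.ascPochhammer_smeval_eq_eval, nsmul_eq_mul] at h
    have h2 : (ascPochhammer ℝ n).eval (1 / 2 : ℝ) = n.factorial * (n.centralBinom / 4 ^ n) := by
      clear h
      induction n with
      | zero => simp
      | succ n ih =>
        rw [ascPochhammer_succ_eval, ih, Nat.factorial_succ]
        have := Nat.succ_mul_centralBinom_succ n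
        have h3 : ((n : ℝ) + 1) * ((n + 1).centralBinom : ℝ) =
            2 * (2 * n + 1) * n.centralBinom := by exact_mod_cast this
        push_cast
        rw [pow_succ]
        field_simp
        linear_combination (-2 : ℝ) * h3
    rw [h2] at h
    rw [← Ring.multichoose_eq]
    exact mul_left_cancel₀ (by exact_mod_cast n.factorial_ne_zero) h
  have h := (Real.one_div_one_sub_rpow_hasFPowerSeriesOnBall_zero (1 / 2)).hasSum
    (y := t) (by
      rw [Metric.mem_eball, edist_zero_right, ← ofReal_norm, Real.norm_of_nonneg ht0]
      exact ENNReal.ofReal_lt_one.2 ht1)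
  rw [Real.sqrt_eq_rpow]
  simp only [zero_add] at h
  refine Eq.mp (congrArg (HasSum · _) (funext fun n => ?_)) h
  rw [FormalMultilinearSeries.ofScalars_apply_eq, hc, smul_eq_mul, div_pow]
  ring

theorem sum_range_succ_choose_succ_mul_pow (n m : ℕ) (p : ℝ) :
    ∑ k ∈ Finset.range (m + 1), ((n + 1).choose k : ℝ) * p ^ k =
      (1 + p) * ∑ k ∈ Finset.range m, (n.choose k : ℝ) * p ^ k + n.choose m * p ^ m := by
  induction m with
  | zero => simp
  | succ m ih =>
    rw [Finset.sum_range_succ, ih, Finset.sum_range_succ, Nat.choose_succ_succ]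
    push_cast
    ring

theorem sum_range_choose_two_mul_add_one (i : ℕ) (p : ℝ) :
    ∑ k ∈ Finset.range (i + 2), ((2 * i + 3).choose k : ℝ) * p ^ k =
      (1 + p) ^ 2 * ∑ k ∈ Finset.range (i + 1), ((2 * i + 1).choose k : ℝ) * p ^ k +
        (1 - p) / 2 * ((i + 1).centralBinom * p ^ (i + 1)) := by
  have hcb : ((i + 1).centralBinom : ℝ) = 2 * (2 * i + 1).choose i := by
    have h : (i + 1).centralBinom = 2 * (2 * i + 1).choose i := by
      rw [Nat.centralBinom, Nat.mul_succ, Nat.choose_succ_succ, Nat.choose_symm_half]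
      ring
    exact_mod_cast h
  have h1 := sum_range_succ_choose_succ_mul_pow (2 * i + 2) (i + 1) p
  have h2 := sum_range_succ_choose_succ_mul_pow (2 * i + 1) i p
  have h3 : ((2 * i + 2).choose (i + 1) : ℝ) = (i + 1).centralBinom := rfl
  rw [h1, h2, Finset.sum_range_succ _ i, h3, hcb]
  ring

/-- The probability that a binomial variable with `2 * i - 1` trials and odds `p` is below `i`. -/
noncomputable def minorityProb (p : ℝ) (i : ℕ) : ℝ :=
  (∑ k ∈ Finset.range i, (Nat.choose (2 * i - 1) k : ℝ) * p ^ k) / (1 + p) ^ (2 * i - 1)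

theorem minorityProb_le_one {p : ℝ} (hp : 0 ≤ p) (i : ℕ) : minorityProb p i ≤ 1 := by
  rw [minorityProb]
  refine div_le_one_of_le₀ ?_ (by positivity)
  rw [add_comm 1 p, add_pow]
  simp only [one_pow, mul_one]
  calc _ ≤ ∑ k ∈ Finset.range (2 * i - 1 + 1), (Nat.choose (2 * i - 1) k : ℝ) * p ^ k := by
        refine Finset.sum_le_sum_of_subset_of_nonneg ?_ fun _ _ _ => by positivity
        intro k hk
        simp only [Finset.mem_range] at hk ⊢
        omega
    _ = _ := Finset.sum_congr rfl fun _ _ => mul_comm _ _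

theorem minorityProb_succ_eq_sum {p : ℝ} (hp : 0 ≤ p) (i : ℕ) :
    minorityProb p (i + 1) = 1 / 2 + (1 - p) / (2 * (1 + p)) *
      ∑ n ∈ Finset.range (i + 1), (n.centralBinom : ℝ) * (p / (1 + p) ^ 2) ^ n := by
  have hp' : 1 + p ≠ 0 := by positivity
  induction i with
  | zero =>
    simp [minorityProb]
    field_simp
    ring
  | succ i ih =>
    rw [Finset.sum_range_succ, mul_add, ← add_assoc, ← ih]
    simp only [minorityProb, show 2 * (i + 1 + 1) - 1 = 2 * i + 3 by omega,
      show 2 * (i + 1) - 1 = 2 * i + 1 by omega]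
    rw [sum_range_choose_two_mul_add_one, div_pow, ← pow_mul]
    field_simp
    ring

theorem sum_minorityProb_identity {p : ℝ} (hp : 0 ≤ p) (y : ℝ) (N : ℕ) :
    1 / 2 + (1 - p) / (2 * (1 + p)) *
        ∑ n ∈ Finset.range (N + 1), (n.centralBinom : ℝ) * (p / (1 + p) ^ 2) ^ n * y ^ n +
        y ^ (N + 1) * (1 - minorityProb p (N + 1)) =
      (1 - y) * ∑ i ∈ Finset.range (N + 1), minorityProb p (i + 1) * y ^ i + y ^ (N + 1) := by
  induction N with
  | zero =>
    simp [minorityProb_succ_eq_sum hp]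
    ring
  | succ N ih =>
    have h1 := minorityProb_succ_eq_sum hp (N + 1)
    rw [Finset.sum_range_succ, mul_add, ← add_assoc, ← minorityProb_succ_eq_sum hp N] at h1
    rw [Finset.sum_range_succ, Finset.sum_range_succ _ (N + 1)]
    linear_combination ih - y ^ (N + 1) * h1

theorem half_add_div_sqrt_le {p y : ℝ} (hp0 : 0 ≤ p) (hp1 : p < 1) (hy0 : 0 ≤ y) (hy1 : y ≤ 1)
    (N : ℕ) :
    1 / 2 + (1 - p) / (2 * √((1 - p) ^ 2 + 4 * p * (1 - y))) ≤
      (1 - y) * ∑ i ∈ Finset.range (N + 1), minorityProb p (i + 1) * y ^ i + y ^ (N + 1) := by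
  rw [← sum_minorityProb_identity hp0]
  have hθ : 4 * p / (1 + p) ^ 2 < 1 := by
    rw [div_lt_one (by positivity)]
    nlinarith [sq_pos_of_pos (sub_pos.2 hp1)]
  have hθ0 : 0 ≤ 4 * p / (1 + p) ^ 2 := by positivity
  have hs := (hasSum_centralBinom_div_four_pow (t := 4 * p / (1 + p) ^ 2 * y) (by positivity)
    (by nlinarith)).tendsto_sum_nat
  have hsqrt : √(1 - 4 * p / (1 + p) ^ 2 * y) =
      √((1 - p) ^ 2 + 4 * p * (1 - y)) / (1 + p) := by
    rw [eq_comm, div_eq_iff (by positivity)]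
    nth_rewrite 2 [← Real.sqrt_sq (show 0 ≤ 1 + p by positivity)]
    rw [← Real.sqrt_mul' _ (by positivity)]
    congr 1
    field_simp
    ring
  have hκ : 0 ≤ (1 - p) / (2 * (1 + p)) := div_nonneg (by linarith) (by positivity)
  have hlim := (hs.const_mul ((1 - p) / (2 * (1 + p)))).const_add (1 / 2)
  have hval : (1 - p) / (2 * √((1 - p) ^ 2 + 4 * p * (1 - y))) =
      (1 - p) / (2 * (1 + p)) * (1 / √(1 - 4 * p / (1 + p) ^ 2 * y)) := by
    rw [hsqrt]
    field_simp
  rw [hval]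
  refine le_of_tendsto hlim (eventually_atTop.2 ⟨N + 1, fun M hM => ?_⟩)
  obtain ⟨j, rfl⟩ := Nat.exists_eq_add_of_le hM
  have hterm : ∀ n : ℕ, (4 * p / (1 + p) ^ 2 * y / 4) ^ n = (p / (1 + p) ^ 2) ^ n * y ^ n := by
    intro n
    rw [← mul_pow]
    congr 1
    ring
  simp only [hterm, ← mul_assoc]
  have key : ∀ j : ℕ, (1 - p) / (2 * (1 + p)) *
      ∑ n ∈ Finset.range (N + 1 + j), (n.centralBinom : ℝ) * (p / (1 + p) ^ 2) ^ n * y ^ n ≤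
      (1 - p) / (2 * (1 + p)) *
      ∑ n ∈ Finset.range (N + 1), (n.centralBinom : ℝ) * (p / (1 + p) ^ 2) ^ n * y ^ n +
      y ^ (N + 1) * (minorityProb p (N + 1 + j) - minorityProb p (N + 1)) := by
    intro j
    induction j with
    | zero => simp
    | succ j ih =>
      have h1 := minorityProb_succ_eq_sum hp0 (N + 1 + j)
      have h2 := minorityProb_succ_eq_sum hp0 (N + j)
      rw [show N + j + 1 = N + 1 + j by ring] at h2
      rw [Finset.sum_range_succ, mul_add, ← add_assoc, ← h2] at h1
      rw [← add_assoc, Finset.sum_range_succ, mul_add, h1]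
      have hpow : y ^ (N + 1 + j) ≤ y ^ (N + 1) := pow_le_pow_of_le_one hy0 hy1 (by omega)
      have hd : 0 ≤ (1 - p) / (2 * (1 + p)) *
          (((N + 1 + j).centralBinom : ℝ) * (p / (1 + p) ^ 2) ^ (N + 1 + j)) := by positivity
      nlinarith [mul_le_mul_of_nonneg_left hpow hd]
  have hle : y ^ (N + 1) * minorityProb p (N + 1 + j) ≤ y ^ (N + 1) * 1 :=
    mul_le_mul_of_nonneg_left (minorityProb_le_one hp0 _) (by positivity)
  linarith [key j]

theorem qp_pos {p x : ℝ} (hp0 : 0 < p) (hx : 0 < x) : 0 < qp p x := by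
  refine div_pos (sub_pos.2 (Real.lt_sqrt_of_sq_lt ?_)) (by positivity)
  have : 0 < 4 * p * x := by positivity
  linarith

theorem qp_quadratic {p x : ℝ} (hp0 : 0 < p) (hx : 0 ≤ x) :
    ((1 - p) + p * qp p x) * qp p x = x := by
  have h := Real.sq_sqrt (show 0 ≤ (1 - p) ^ 2 + 4 * p * x by positivity)
  rw [qp]
  generalize √((1 - p) ^ 2 + 4 * p * x) = D at *
  field_simp
  linear_combination h

theorem qp_one {p : ℝ} (hp0 : 0 < p) : qp p 1 = 1 := by
  rw [qp, show (1 - p) ^ 2 + 4 * p * 1 = (1 + p) ^ 2 by ring, Real.sqrt_sq (by positivity)]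
  field_simp
  ring

theorem hasDerivAt_log_qp {p y : ℝ} (hp0 : 0 < p) (hy : y < 1) :
    HasDerivAt (fun y => Real.log (qp p (1 - y)))
      (-((1 / 2 + (1 - p) / (2 * √((1 - p) ^ 2 + 4 * p * (1 - y)))) / (1 - y))) y := by
  have hx : 0 < 1 - y := sub_pos.2 hy
  have hpos : 0 < (1 - p) ^ 2 + 4 * p * (1 - y) := by positivity
  have hq := qp_pos hp0 hx
  have h1 : HasDerivAt (fun y : ℝ => (1 - p) ^ 2 + 4 * p * (1 - y)) (4 * p * -1) y :=
    (((hasDerivAt_id y).const_sub 1).const_mul (4 * p)).const_add _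
  have h2 : HasDerivAt (fun y => qp p (1 - y)) _ y :=
    ((h1.sqrt hpos.ne').sub_const (1 - p)).div_const (2 * p)
  convert h2.log hq.ne' using 1
  have hD : 0 < √((1 - p) ^ 2 + 4 * p * (1 - y)) := Real.sqrt_pos.2 hpos
  have hsq := Real.sq_sqrt hpos.le
  rw [qp] at hq ⊢
  have hq' : 0 < √((1 - p) ^ 2 + 4 * p * (1 - y)) - (1 - p) := by
    rwa [div_pos_iff_of_pos_right (by positivity)] at hq
  generalize √((1 - p) ^ 2 + 4 * p * (1 - y)) = D at *
  field_simp
  linear_combination -hsq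

theorem sum_Icc_one_eq_sum_range (f : ℕ → ℝ) (N : ℕ) :
    ∑ i ∈ Finset.Icc 1 N, f i = ∑ i ∈ Finset.range N, f (i + 1) := by
  rw [Finset.range_eq_Ico, Finset.sum_Ico_add' f 0 N 1]
  rfl

theorem neg_log_qp_le {p : ℝ} (hp0 : 0 < p) (hp1 : p < 1) (N : ℕ) {y : ℝ}
    (hy0 : 0 ≤ y) (hy : y ≤ 1 - 1 / ((N : ℝ) + 1)) :
    -Real.log (qp p (1 - y)) ≤ ∑ i ∈ Finset.Icc 1 (N + 1), aCoeff p i * y ^ i +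
      ((N : ℝ) + 1) / (N + 2) * y ^ (N + 2) := by
  have hN : 0 < 1 / ((N : ℝ) + 1) := by positivity
  let f : ℝ → ℝ := fun y => ∑ i ∈ Finset.range (N + 1), aCoeff p (i + 1) * y ^ (i + 1) +
    ((N : ℝ) + 1) / (N + 2) * y ^ (N + 2) + Real.log (qp p (1 - y))
  have hf : ∀ y < 1, HasDerivAt f (∑ i ∈ Finset.range (N + 1), minorityProb p (i + 1) * y ^ i +
      (N + 1) * y ^ (N + 1) +
      -((1 / 2 + (1 - p) / (2 * √((1 - p) ^ 2 + 4 * p * (1 - y)))) / (1 - y))) y := by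
    intro y hy
    refine (HasDerivAt.add (HasDerivAt.fun_sum fun i _ => ?_) ?_).add (hasDerivAt_log_qp hp0 hy)
    · refine ((hasDerivAt_pow (i + 1) y).const_mul (aCoeff p (i + 1))).congr_deriv ?_
      simp only [aCoeff, minorityProb, Nat.add_sub_cancel]
      field_simp
    · refine ((hasDerivAt_pow (N + 2) y).const_mul (((N : ℝ) + 1) / (N + 2))).congr_deriv ?_
      push_cast
      field_simp
  have hmono : MonotoneOn f (Set.Icc 0 (1 - 1 / ((N : ℝ) + 1))) := by
    refine monotoneOn_of_hasDerivWithinAt_nonneg (convex_Icc _ _)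
      (fun z hz => (hf z (by linarith [hz.2])).continuousAt.continuousWithinAt)
      (fun z hz => (hf z ?_).hasDerivWithinAt) fun z hz => ?_
    · rw [interior_Icc] at hz
      linarith [hz.2]
    · rw [interior_Icc] at hz
      have hz1 : 0 < 1 - z := by linarith [hz.2]
      have hb := half_add_div_sqrt_le hp0.le hp1 hz.1.le (by linarith) N
      have hz2 : 1 ≤ (N + 1) * (1 - z) := by
        have := hz.2
        rw [← div_le_iff₀' (by positivity)]
        linarith
      have hzp : 0 ≤ z ^ (N + 1) := pow_nonneg hz.1.le _
      rw [← sub_eq_add_neg, sub_nonneg, div_le_iff₀ hz1]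
      nlinarith [mul_le_mul_of_nonneg_right hz2 hzp]
  have h := hmono ⟨le_rfl, hy0.trans hy⟩ ⟨hy0, hy⟩ hy0
  have hf0 : f 0 = 0 := by simp [f, qp_one hp0]
  rw [hf0] at h
  rw [sum_Icc_one_eq_sum_range]
  simp only [f] at h
  linarith

theorem aCoeff_nonneg {p : ℝ} (hp : 0 ≤ p) (i : ℕ) : 0 ≤ aCoeff p i := by
  unfold aCoeff
  positivity

theorem lamBarN_eq {p μ : ℝ} (hp : 0 ≤ p) (hμ : 0 < μ) (N : ℕ) (x : ℝ) :
    lamBarN p μ N x =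
      Real.exp (-(μ + ∑ i ∈ Finset.Icc 1 N, aCoeff p i * (1 - x) ^ i + (1 - x) ^ N)) := by
  have hG : 0 ≤ Gpart p N := Finset.sum_nonneg fun i _ => aCoeff_nonneg hp i
  rw [lamBarN, rhoN, neg_mul, mul_div_cancel₀ _ (by positivity)]

theorem lamBarN_monotoneOn {p μ : ℝ} (hp : 0 ≤ p) (hμ : 0 < μ) (N : ℕ) :
    MonotoneOn (lamBarN p μ N) (Set.Iic 1) := by
  intro x _ y hy hxy
  have hy' : 0 ≤ 1 - y := sub_nonneg.2 hy
  simp only [lamBarN_eq hp hμ]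
  have ha := aCoeff_nonneg hp
  gcongr
  exact ha _

theorem lamBarN_le_one {p μ : ℝ} (hp : 0 ≤ p) (hμ : 0 < μ) (N : ℕ) {x : ℝ} (hx : x ≤ 1) :
    lamBarN p μ N x ≤ 1 := by
  have hx' : 0 ≤ 1 - x := sub_nonneg.2 hx
  have hs : 0 ≤ ∑ i ∈ Finset.Icc 1 N, aCoeff p i * (1 - x) ^ i :=
    Finset.sum_nonneg fun i _ => mul_nonneg (aCoeff_nonneg hp i) (by positivity)
  rw [lamBarN_eq hp hμ, Real.exp_le_one_iff, neg_nonpos]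
  positivity

theorem continuous_deSym (p μ : ℝ) (N : ℕ) : Continuous (deSym p μ N) := by
  unfold deSym lamBarN rhoN
  fun_prop

theorem deSym_lt_self {p μ : ℝ} (hp0 : 0 < p) (hp1 : p < 1) (hμ : 0 < μ) (N : ℕ) {x : ℝ}
    (hx : 1 / ((N : ℝ) + 1) ≤ x) (hx1 : x ≤ 1) : deSym p μ (N + 1) x < x := by
  have hx0 : 0 < x := lt_of_lt_of_le (by positivity) hx
  have hy0 : 0 ≤ 1 - x := sub_nonneg.2 hx1
  have hb := neg_log_qp_le hp0 hp1 N hy0 (by linarith)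
  rw [sub_sub_cancel] at hb
  have hq := qp_pos hp0 hx0
  have htail : ((N : ℝ) + 1) / (N + 2) * (1 - x) ^ (N + 2) ≤ (1 - x) ^ (N + 1) := by
    have h1 : ((N : ℝ) + 1) / (N + 2) ≤ 1 := div_le_one_of_le₀ (by linarith) (by positivity)
    have h2 : (1 - x) ^ (N + 2) ≤ (1 - x) ^ (N + 1) :=
      pow_le_pow_of_le_one hy0 (by linarith) (by omega)
    exact (mul_le_of_le_one_left (by positivity) h1).trans h2
  have hlam : lamBarN p μ (N + 1) x < qp p x := by
    rw [lamBarN_eq hp0.le hμ, ← Real.lt_log_iff_exp_lt hq]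
    linarith
  have hlam0 : 0 < lamBarN p μ (N + 1) x := Real.exp_pos _
  calc deSym p μ (N + 1) x < ((1 - p) + p * qp p x) * qp p x := by
        unfold deSym
        have : 0 < 1 - p := sub_pos.2 hp1
        gcongr
    _ = x := qp_quadratic hp0 hx0.le

theorem stmt10 (p : ℝ) (hp0 : 0 < p) (hp1 : p < 1) (μ : ℝ) (hμ : 0 < μ)
    (N : ℕ) (hN : 1 ≤ N) :
    ContinuousOn (deSym p μ N) (Set.Icc 0 1) ∧
    MonotoneOn (deSym p μ N) (Set.Icc 0 1) ∧
    Set.MapsTo (deSym p μ N) (Set.Icc 0 1) (Set.Icc 0 1) ∧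
    Antitone (fun n : ℕ => (deSym p μ N)^[n] 1) ∧
    ∃ L : ℝ,
      Filter.Tendsto (fun n : ℕ => (deSym p μ N)^[n] 1) Filter.atTop (nhds L) ∧
      deSym p μ N L = L ∧ L < 1 / (N : ℝ) := by
  have hlam0 : ∀ x, 0 < lamBarN p μ N x := fun x => Real.exp_pos _
  have hq : 0 < 1 - p := sub_pos.2 hp1
  have hmono : MonotoneOn (deSym p μ N) (Set.Icc 0 1) := by
    intro x hx y hy hxy
    have h := lamBarN_monotoneOn hp0.le hμ N (Set.mem_Iic.2 hx.2) (Set.mem_Iic.2 hy.2) hxy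
    have h0 := (hlam0 x).le
    have h1 := (hlam0 y).le
    unfold deSym
    gcongr
  have hmaps : Set.MapsTo (deSym p μ N) (Set.Icc 0 1) (Set.Icc 0 1) := by
    intro x hx
    have h := lamBarN_le_one hp0.le hμ N hx.2
    have h0 := (hlam0 x).le
    refine ⟨by unfold deSym; positivity, mul_le_one₀ ?_ h0 h⟩
    nlinarith
  have hcont := continuous_deSym p μ N
  have hmem : ∀ n : ℕ, (deSym p μ N)^[n] 1 ∈ Set.Icc (0 : ℝ) 1 := fun n =>
    hmaps.iterate n ⟨zero_le_one, le_rfl⟩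
  have hanti : Antitone (fun n : ℕ => (deSym p μ N)^[n] 1) := by
    refine antitone_nat_of_succ_le fun n => ?_
    induction n with
    | zero => exact (hmem 1).2
    | succ n ih =>
      have h := hmono (hmem (n + 1)) (hmem n) ih
      simpa only [Function.iterate_succ_apply'] using h
  refine ⟨hcont.continuousOn, hmono, hmaps, hanti, ?_⟩
  have hlim := tendsto_atTop_ciInf hanti ⟨0, by rintro _ ⟨n, rfl⟩; exact (hmem n).1⟩
  have hL := isClosed_Icc.mem_of_tendsto hlim (Eventually.of_forall hmem)
  have hfix := isFixedPt_of_tendsto_iterate hlim hcont.continuousAt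
  refine ⟨_, hlim, hfix, ?_⟩
  by_contra! hge
  obtain ⟨M, rfl⟩ := Nat.exists_eq_add_of_le' hN
  push_cast at hge
  exact (deSym_lt_self hp0 hp1 hμ M hge hL.2).ne hfix
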